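/- Let C([0,1]) be the Banach space of continuous real-valued functions on [0,1] with the supremum norm and C_0([0,1]) = {ψ ∈ C([0,1]) : ψ(0) = 0}. The map Q₁ : C([0,1]) → C_0([0,1]) × ℝ defined by Q₁(N) = (ψ₁, c₁) with ψ₁(x) = N(x) − N(0) − (1/2)∫_0^x N(y)² dy and c₁ = N(0) is of class C^∞ (infinitely Fréchet differentiable). Its differential at 0 is the map δN ↦ (δN − δN(0), δN(0)), which is a Banach space isomorphism from C([0,1]) onto C_0([0,1]) × ℝ. Consequently, the restriction of Q₁ to an appropriate open neighborhood of 0 in C([0,1]) is a C^∞ diffeomorphism onto an open neighborhood of (0,0) in C_0([0,1]) × ℝ. -/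

import Mathlib

open Set Filter Topology

noncomputable section

/-- the unit interval `[0,1]`, as a compact topological space. -/
abbrev UI : Type := Set.Icc (0:ℝ) 1

/-- the point `0 ∈ [0,1]`. -/
def pt0 : UI := ⟨0, by norm_num⟩

/-- the closed subspace `C_0([0,1]) = {ψ ∈ C([0,1]) : ψ(0) = 0}`. -/
def C0sub : Submodule ℝ C(UI, ℝ) where
  carrier := {f | f pt0 = 0}
  add_mem' := by
    intro a b ha hb
    simp only [Set.mem_setOf_eq, ContinuousMap.add_apply] at *
    rw [ha, hb]; ring
  zero_mem' := by simp [Set.mem_setOf_eq]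
  smul_mem' := by
    intro c f hf
    simp only [Set.mem_setOf_eq, ContinuousMap.smul_apply, smul_eq_mul] at *
    rw [hf]; ring

/-- `N²`, extended to `ℝ` by projection onto `[0,1]`. -/
def sq2 (N : C(UI, ℝ)) : ℝ → ℝ := fun t => (N (Set.projIcc 0 1 zero_le_one t)) ^ 2

lemma sq2_cont (N : C(UI, ℝ)) : Continuous (sq2 N) :=
  (N.continuous.comp continuous_projIcc).pow 2

/-- the function part `ψ₁` of `Q₁(N)`:
`ψ₁(x) = N(x) - N(0) - (1/2) ∫_0^x N(y)² dy`. -/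
def psi1 (N : C(UI, ℝ)) : C(UI, ℝ) :=
  ⟨fun x => N x - N pt0 - (1/2) * ∫ t in (0:ℝ)..(x:ℝ), sq2 N t, by
    have hprim : Continuous fun y : ℝ => ∫ t in (0:ℝ)..y, sq2 N t :=
      intervalIntegral.continuous_primitive
        (fun a b => (sq2_cont N).intervalIntegrable a b) 0
    exact (N.continuous.sub continuous_const).sub
      (continuous_const.mul (hprim.comp continuous_subtype_val))⟩

lemma psi1_mem (N : C(UI, ℝ)) : psi1 N ∈ C0sub := by
  show (psi1 N) pt0 = 0
  have : ((pt0 : UI) : ℝ) = 0 := rfl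
  simp [psi1, this]

/-- the map `Q₁ : C([0,1]) → C_0([0,1]) × ℝ`,
`Q₁(N) = (N - N(0) - (1/2)∫_0^· N², N(0))`. -/
def Q1 : C(UI, ℝ) → (C0sub × ℝ) := fun N => (⟨psi1 N, psi1_mem N⟩, N pt0)

/-- the isomorphism `δN ↦ (δN - δN(0), δN(0))`. -/
def eIso : C(UI, ℝ) ≃L[ℝ] (C0sub × ℝ) :=
  ContinuousLinearEquiv.equivOfInverse
    (((ContinuousLinearMap.id ℝ C(UI, ℝ) -
        (ContinuousMap.evalCLM ℝ pt0).smulRight (1 : C(UI, ℝ))).codRestrict C0sub (by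
          intro N
          show _ = _
          simp [ContinuousMap.evalCLM])).prod (ContinuousMap.evalCLM ℝ pt0))
    (C0sub.subtypeL.comp (ContinuousLinearMap.fst ℝ C0sub ℝ) +
      (ContinuousLinearMap.snd ℝ C0sub ℝ).smulRight (1 : C(UI, ℝ)))
    (by
      intro N
      ext x
      simp [ContinuousMap.evalCLM])
    (by
      rintro ⟨⟨f, hf⟩, c⟩
      have hf' : f pt0 = 0 := hf
      refine Prod.ext (Subtype.ext ?_) ?_
      · ext x
        simp [ContinuousMap.evalCLM, hf']
      · simp [ContinuousMap.evalCLM, hf'])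

lemma eIso_fst (N : C(UI, ℝ)) (x : UI) : ((eIso N).1 : C(UI, ℝ)) x = N x - N pt0 := by
  simp [eIso, ContinuousMap.evalCLM]

lemma eIso_snd (N : C(UI, ℝ)) : (eIso N).2 = N pt0 := by
  simp [eIso, ContinuousMap.evalCLM]

lemma ext_cont (f : C(UI, ℝ)) :
    Continuous (fun t : ℝ => f (Set.projIcc 0 1 zero_le_one t)) :=
  f.continuous.comp continuous_projIcc

/-- the primitive of `f` as a continuous function. -/
def primFun (f : C(UI, ℝ)) : C(UI, ℝ) :=
  ⟨fun x => ∫ t in (0:ℝ)..(x:ℝ), f (Set.projIcc 0 1 zero_le_one t),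
    (intervalIntegral.continuous_primitive
      (fun a b => (ext_cont f).intervalIntegrable a b) 0).comp continuous_subtype_val⟩

lemma primFun_mem (f : C(UI, ℝ)) : primFun f ∈ C0sub := by
  show (primFun f) pt0 = 0
  have : ((pt0 : UI) : ℝ) = 0 := rfl
  simp [primFun, this]

/-- the primitive as a continuous linear map. -/
def primL : C(UI, ℝ) →L[ℝ] C0sub :=
  LinearMap.mkContinuous
    { toFun := fun f => ⟨primFun f, primFun_mem f⟩
      map_add' := by
        intro f g
        refine Subtype.ext ?_
        ext x
        exact intervalIntegral.integral_add ((ext_cont f).intervalIntegrable _ _)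
          ((ext_cont g).intervalIntegrable _ _)
      map_smul' := by
        intro c f
        refine Subtype.ext ?_
        ext x
        exact intervalIntegral.integral_const_mul c _ } 1 (by
    intro f
    show ‖primFun f‖ ≤ 1 * ‖f‖
    rw [one_mul, ContinuousMap.norm_le _ (norm_nonneg _)]
    intro x
    have h := intervalIntegral.norm_integral_le_of_norm_le_const (a := (0:ℝ)) (b := (x:ℝ))
      (C := ‖f‖) (f := fun t => f (Set.projIcc 0 1 zero_le_one t))
      (fun t _ => f.norm_coe_le_norm _)
    refine h.trans ?_
    have h0 : (0:ℝ) ≤ x := x.2.1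
    have h1 : (x:ℝ) ≤ 1 := x.2.2
    rw [sub_zero, abs_of_nonneg h0]
    exact mul_le_of_le_one_right (norm_nonneg _) h1)

/-- the quadratic part. -/
def quadL : C(UI, ℝ) →L[ℝ] (C0sub × ℝ) :=
  (ContinuousLinearMap.inl ℝ C0sub ℝ).comp ((1/2 : ℝ) • primL)

lemma Q1_eq : Q1 = fun N => eIso N - quadL (N * N) := by
  funext N
  refine Prod.ext (Subtype.ext ?_) ?_
  · ext x
    show N x - N pt0 - (1/2) * (∫ t in (0:ℝ)..(x:ℝ), sq2 N t) =
      ((eIso N).1 : C(UI, ℝ)) x - (1/2) * ∫ t in (0:ℝ)..(x:ℝ), _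
    rw [eIso_fst]
    congr 3
    funext t
    exact pow_two _
  · show N pt0 = (eIso N).2 - 0
    rw [eIso_snd, sub_zero]

lemma Q1_contDiff : ContDiff ℝ (⊤ : ℕ∞) Q1 := by
  rw [Q1_eq]
  have hm : ContDiff ℝ (⊤ : ℕ∞) (fun N : C(UI, ℝ) => N * N) := contDiff_id.mul contDiff_id
  have hq : ContDiff ℝ (⊤ : ℕ∞) (fun N : C(UI, ℝ) => quadL N) :=
    ContinuousLinearMap.contDiff (𝕜 := ℝ) (E := C(UI, ℝ)) (F := C0sub × ℝ) quadL
  exact eIso.contDiff.sub (hq.comp hm)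

lemma quad_deriv {A G : Type*} [NormedRing A] [NormedAlgebra ℝ A] [NormedAddCommGroup G]
    [NormedSpace ℝ G] (e L : A →L[ℝ] G) :
    HasFDerivAt (fun N : A => e N - L (N * N)) e 0 := by
  have hm : HasFDerivAt (fun N : A => N * N) (0 : A →L[ℝ] A) 0 := by
    have := (hasFDerivAt_id (𝕜 := ℝ) (0 : A)).mul' (hasFDerivAt_id (𝕜 := ℝ) (0 : A))
    refine this.congr_fderiv ?_
    apply ContinuousLinearMap.ext
    intro N
    simp
  have h := L.hasFDerivAt.comp (0 : A) hm
  exact (e.hasFDerivAt.sub h).congr_fderiv (by simp)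

lemma Q1_deriv : HasFDerivAt Q1 (eIso : C(UI, ℝ) →L[ℝ] (C0sub × ℝ)) 0 := by
  rw [Q1_eq]
  exact quad_deriv (A := C(UI, ℝ)) (G := C0sub × ℝ)
    (eIso : C(UI, ℝ) →L[ℝ] (C0sub × ℝ)) quadL

instance C0sub_complete : CompleteSpace C0sub := by
  have : IsClosed (C0sub : Set C(UI, ℝ)) :=
    isClosed_eq (ContinuousMap.evalCLM ℝ pt0 : C(UI, ℝ) →L[ℝ] ℝ).continuous continuous_const
  exact this.completeSpace_coe

/-- `Q₁` is `C^∞`, its differential at `0` is the Banach space isomorphism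
`δN ↦ (δN - δN(0), δN(0))`, and `Q₁` restricts to a `C^∞` diffeomorphism between open
neighbourhoods of `0` and `(0,0)`. -/
theorem stmt13 :
    ContDiff ℝ (⊤ : ℕ∞) Q1 ∧
    (∃ e : C(UI, ℝ) ≃L[ℝ] (C0sub × ℝ),
      (∀ δN : C(UI, ℝ),
        (∀ x : UI, (((e δN).1 : C(UI, ℝ)) x = δN x - δN pt0)) ∧ (e δN).2 = δN pt0) ∧
      HasFDerivAt Q1 (e : C(UI, ℝ) →L[ℝ] (C0sub × ℝ)) 0) ∧
    ∃ U : Set C(UI, ℝ), IsOpen U ∧ (0 : C(UI, ℝ)) ∈ U ∧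
      ∃ V : Set (C0sub × ℝ), IsOpen V ∧ (0 : C0sub × ℝ) ∈ V ∧
        Q1 '' U = V ∧ Set.InjOn Q1 U ∧
        ∃ Qi : (C0sub × ℝ) → C(UI, ℝ), ContDiffOn ℝ (⊤ : ℕ∞) Qi V ∧
          (∀ x ∈ U, Qi (Q1 x) = x) ∧ ∀ y ∈ V, Q1 (Qi y) = y := by
  refine ⟨Q1_contDiff, ⟨eIso, fun N => ⟨eIso_fst N, eIso_snd N⟩, Q1_deriv⟩, ?_⟩
  have hne : ((⊤ : ℕ∞) : WithTop ℕ∞) ≠ 0 := by simp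
  let h := Q1_contDiff.contDiffAt.toOpenPartialHomeomorph Q1 Q1_deriv hne
  have hcoe : (h : C(UI, ℝ) → C0sub × ℝ) = Q1 := rfl
  have h0s : (0 : C(UI, ℝ)) ∈ h.source :=
    Q1_contDiff.contDiffAt.mem_toOpenPartialHomeomorph_source Q1_deriv hne
  let W : Set C(UI, ℝ) := (fderiv ℝ Q1) ⁻¹'
    Set.range ((↑) : (C(UI, ℝ) ≃L[ℝ] (C0sub × ℝ)) → (C(UI, ℝ) →L[ℝ] (C0sub × ℝ)))
  have hW : IsOpen W :=
    (ContinuousLinearEquiv.isOpen).preimage (Q1_contDiff.continuous_fderiv hne)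
  have h0W : (0 : C(UI, ℝ)) ∈ W := ⟨eIso, Q1_deriv.fderiv.symm⟩
  have hQ0 : Q1 0 = 0 := by rw [Q1_eq]; simp
  have himg : Q1 '' (h.source ∩ W) = h.target ∩ h.symm ⁻¹' W :=
    h.image_source_inter_eq' W
  refine ⟨h.source ∩ W, h.open_source.inter hW, ⟨h0s, h0W⟩, h.target ∩ h.symm ⁻¹' W,
    h.symm.isOpen_inter_preimage hW, ?_, himg, h.injOn.mono inter_subset_left, h.symm, ?_,
    fun x hx => h.left_inv hx.1, fun y hy => h.right_inv hy.1⟩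
  · rw [← himg]
    exact ⟨0, ⟨h0s, h0W⟩, hQ0⟩
  · rintro y ⟨hy, e', he'⟩
    have hd : HasFDerivAt h (e' : C(UI, ℝ) →L[ℝ] (C0sub × ℝ)) (h.symm y) := by
      rw [he']
      exact (Q1_contDiff.differentiable hne _).hasFDerivAt
    exact (h.contDiffAt_symm hy hd Q1_contDiff.contDiffAt).contDiffWithinAt

end
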